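/- arXiv:2403.19494 — 2 statements merged into one kernel-verified Lean document; each statement's English description precedes it below -/
import Mathlib

section
/- (Corollary 4.4: excess error bound for the full two-stage method.) Assume there exist α ∈ (0,1] and β > 0 such that for every probability measure ν on X×{0,...,n_e} and every measurable r : X → ℝ^{n_e+1}, E_{ℓ01}(r) − E*_{ℓ01} ≤ β·(E_ℓ(r) − E*_ℓ)^α. Then for every probability measure μ on X×ℝ, every measurable predictor h : X → ℝ and every measurable deferral function r : X → ℝ^{n_e+1}, E_{L_def}(h,r) − E*_{L_def} ≤ (E_L(h) − inf_{h' measurable} E_L(h')) + (n_e·(l̄ + Σ_{j=1}^{n_e} C_j))^{1−α}·β·(E_{L^h_ℓ}(r) − inf_{r' measurable} E_{L^h_ℓ}(r'))^α, where E_L(h) = ∫ L(h(x),y) dμ(x,y). -/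
open MeasureTheory Finset ENNReal

variable {X : Type*}

/-- The deferral loss `L_def(h,r,x,y)`. -/
noncomputable def defLoss (nE : ℕ) (L : ℝ → ℝ → ℝ) (c : Fin nE → X × ℝ → ℝ)
    (sel : (Fin (nE + 1) → ℝ) → Fin (nE + 1))
    (h : X → ℝ) (r : X → Fin (nE + 1) → ℝ) (z : X × ℝ) : ℝ :=
  (if sel (r z.1) = 0 then L (h z.1) z.2 else 0)
    + ∑ j : Fin nE, if sel (r z.1) = j.succ then c j z else 0

/-- The single-stage surrogate loss `L_ℓ(h,r,x,y)`. -/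
noncomputable def surLoss (nE : ℕ) (L : ℝ → ℝ → ℝ) (c : Fin nE → X × ℝ → ℝ)
    (ℓ : (Fin (nE + 1) → ℝ) → Fin (nE + 1) → ℝ)
    (h : X → ℝ) (r : X → Fin (nE + 1) → ℝ) (z : X × ℝ) : ℝ :=
  (∑ j, c j z) * ℓ (r z.1) 0
    + ∑ j : Fin nE, (L (h z.1) z.2 + ∑ j' ∈ univ.erase j, c j' z) * ℓ (r z.1) j.succ
    - ((nE : ℝ) - 1) * L (h z.1) z.2

/-- The two-stage surrogate loss `L^h_ℓ(r,x,y)` (no `−(n_e−1)L` term). -/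
noncomputable def surLossTS (nE : ℕ) (L : ℝ → ℝ → ℝ) (c : Fin nE → X × ℝ → ℝ)
    (ℓ : (Fin (nE + 1) → ℝ) → Fin (nE + 1) → ℝ)
    (h : X → ℝ) (r : X → Fin (nE + 1) → ℝ) (z : X × ℝ) : ℝ :=
  (∑ j, c j z) * ℓ (r z.1) 0
    + ∑ j : Fin nE, (L (h z.1) z.2 + ∑ j' ∈ univ.erase j, c j' z) * ℓ (r z.1) j.succ

/-- Generalization error of a nonnegative loss, as a Lebesgue integral in `[0,∞]`. -/
noncomputable def genErr {W : Type*} [MeasurableSpace W] (μ : Measure W) (f : W → ℝ) : ℝ≥0∞ :=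
  ∫⁻ w, ENNReal.ofReal (f w) ∂μ

variable [MeasurableSpace X]

/-- Multi-class zero-one generalization error `E_{ℓ01}(r)`. -/
noncomputable def E01 (nE : ℕ) (sel : (Fin (nE + 1) → ℝ) → Fin (nE + 1))
    (ν : Measure (X × Fin (nE + 1))) (r : X → Fin (nE + 1) → ℝ) : ℝ≥0∞ :=
  ν {z | sel (r z.1) ≠ z.2}

/-- Multi-class surrogate generalization error `E_ℓ(r)`. -/
noncomputable def Eell (nE : ℕ) (ℓ : (Fin (nE + 1) → ℝ) → Fin (nE + 1) → ℝ)
    (ν : Measure (X × Fin (nE + 1))) (r : X → Fin (nE + 1) → ℝ) : ℝ≥0∞ :=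
  ∫⁻ z, ENNReal.ofReal (ℓ (r z.1) z.2) ∂ν

/-!
Let `a i` be the losses of the `n_e + 1` actions, `a 0 = L(h(x), y)` and `a j = c_j`, and let
`w_j = ∑_{i ≠ j} a i`. The deferral loss is `a` at the selected action and the two-stage surrogate
is `∑_j w_j ℓ(·, j)`. Giving label `j` at `x` the weight `w_j` defines a measure on
`X × {0, …, n_e}` of mass `n_e ∫ ∑_i a i`. Since `a k + w_k = ∑_i a i`, its zero-one risk differs
from the deferral error by a constant independent of `r`, while its surrogate risk is the two-stage
surrogate error. Normalizing it to a probability measure and applying the assumed bound bounds the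
deferral excess for fixed `h`, and the normalization costs the factor `mass^(1 - α)`.

Replacing `h` by `h'` changes the deferral error only where action `0` is selected. The predictor
equal to `h'` there and to `h` elsewhere gains exactly as much on `h` in prediction error, so this
gain is at most the excess prediction error of `h`.
-/

section Excess

variable {S : Type*} [MeasurableSpace S] {R R' : (X → S) → ℝ≥0∞} {f g : X → S}

/-- The excess `R(f) − inf_g R(g)` of a risk functional over its infimum on measurable functions.
The subtraction is truncated; it takes the value `0` when both terms are infinite. -/
noncomputable def excess (R : (X → S) → ℝ≥0∞) (f : X → S) : ℝ≥0∞ :=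
  R f - ⨅ (g : X → S) (_ : Measurable g), R g

theorem excess_add_iInf (hf : Measurable f) :
    excess R f + ⨅ (g : X → S) (_ : Measurable g), R g = R f :=
  tsub_add_cancel_of_le (iInf₂_le f hf)

theorem le_excess_add (hg : Measurable g) : R f ≤ excess R f + R g := by
  rw [← tsub_le_iff_right, excess]
  gcongr
  exact iInf₂_le g hg

theorem excess_congr (hf : Measurable f) (h : ∀ g, Measurable g → R g = R' g) :
    excess R f = excess R' f := by
  rw [excess, excess, h f hf, iInf_congr fun g => iInf_congr (h g)]

theorem excess_add_const {t : ℝ≥0∞} (ht : t ≠ ∞) :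
    excess (fun g => R g + t) f = excess R f := by
  rw [excess, ← ENNReal.iInf₂_add, ENNReal.add_sub_add_eq_sub_right ht, excess]

theorem excess_const_mul {t : ℝ≥0∞} (ht₀ : t ≠ 0) (ht : t ≠ ∞) :
    excess (fun g => t * R g) f = t * excess R f := by
  simp only [excess, ENNReal.mul_sub fun _ _ => ht, ENNReal.mul_iInf_of_ne ht₀ ht]

end Excess

section Classification

variable {S ι : Type*} [MeasurableSpace ι] {sel : S → ι} {ℓ : S → ι → ℝ≥0∞} {r : X → S}

/-- The probability (mass) of misclassification of the classifier `sel ∘ r`; for `S = ℝ^{n_e+1}`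
this is `E01`. -/
noncomputable def zeroOneRisk (sel : S → ι) (ν : Measure (X × ι)) (r : X → S) : ℝ≥0∞ :=
  ν {p | sel (r p.1) ≠ p.2}

/-- The surrogate risk of the scoring function `r`, with a surrogate loss valued in `[0,∞]`;
for `S = ℝ^{n_e+1}` this is `Eell`. -/
noncomputable def surrogateRisk (ℓ : S → ι → ℝ≥0∞) (ν : Measure (X × ι)) (r : X → S) : ℝ≥0∞ :=
  ∫⁻ p, ℓ (r p.1) p.2 ∂ν

/-- The excess error bound `excess E_{ℓ01} ≤ β (excess E_ℓ)^α` over all probability distributions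
on `X × ι`, which is what multi-class consistency theorems provide. -/
def HasExcessErrorBound (X : Type*) [MeasurableSpace X] [MeasurableSpace S] (sel : S → ι)
    (ℓ : S → ι → ℝ≥0∞) (α : ℝ) (β : ℝ≥0∞) : Prop :=
  ∀ ν : Measure (X × ι), IsProbabilityMeasure ν → ∀ r : X → S, Measurable r →
    excess (zeroOneRisk sel ν) r ≤ β * excess (surrogateRisk ℓ ν) r ^ α

variable [MeasurableSpace S]

theorem excess_zeroOneRisk_smul {t : ℝ≥0∞} (ht₀ : t ≠ 0) (ht : t ≠ ∞) (ν : Measure (X × ι)) :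
    excess (zeroOneRisk sel (t • ν)) r = t * excess (zeroOneRisk sel ν) r :=
  excess_const_mul ht₀ ht

theorem excess_surrogateRisk_smul {t : ℝ≥0∞} (ht₀ : t ≠ 0) (ht : t ≠ ∞) (ν : Measure (X × ι)) :
    excess (surrogateRisk ℓ (t • ν)) r = t * excess (surrogateRisk ℓ ν) r := by
  rw [← excess_const_mul ht₀ ht]
  exact congrArg (excess · r) (funext fun _ => lintegral_smul_measure _ _)

theorem HasExcessErrorBound.excess_le_of_isFiniteMeasure {α : ℝ} (hα : 0 ≤ α) {β : ℝ≥0∞}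
    (hbound : HasExcessErrorBound X sel ℓ α β) (ν : Measure (X × ι)) [IsFiniteMeasure ν]
    (hr : Measurable r) :
    excess (zeroOneRisk sel ν) r
      ≤ ν Set.univ ^ (1 - α) * β * excess (surrogateRisk ℓ ν) r ^ α := by
  rcases eq_zero_or_neZero ν with rfl | _
  · simp [excess, zeroOneRisk]
  set t := ν Set.univ
  have ht₀ : t ≠ 0 := NeZero.ne _
  have ht : t ≠ ∞ := measure_ne_top ν _
  obtain ⟨ν', hν', hν⟩ : ∃ ν' : Measure (X × ι), IsProbabilityMeasure ν' ∧ ν = t • ν' :=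
    ⟨t⁻¹ • ν, isProbabilityMeasureSMul, by
      rw [smul_smul, ENNReal.mul_inv_cancel ht₀ ht, one_smul]⟩
  calc excess (zeroOneRisk sel ν) r
      = t * excess (zeroOneRisk sel ν') r := by rw [hν, excess_zeroOneRisk_smul ht₀ ht]
    _ ≤ t * (β * excess (surrogateRisk ℓ ν') r ^ α) := by gcongr; exact hbound ν' hν' r hr
    _ = t ^ (1 - α) * t ^ α * (β * excess (surrogateRisk ℓ ν') r ^ α) := by
      rw [← ENNReal.rpow_add _ _ ht₀ ht, sub_add_cancel, ENNReal.rpow_one]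
    _ = t ^ (1 - α) * β * (t * excess (surrogateRisk ℓ ν') r) ^ α := by
      rw [ENNReal.mul_rpow_of_nonneg _ _ hα]; ring
    _ = t ^ (1 - α) * β * excess (surrogateRisk ℓ ν) r ^ α := by
      rw [hν, excess_surrogateRisk_smul ht₀ ht]

end Classification

section CostSensitive

theorem sum_sum_erase_eq_nsmul {ι M : Type*} [Fintype ι] [DecidableEq ι] [AddCommMonoid M]
    (a : ι → M) :
    ∑ j, ∑ i ∈ univ.erase j, a i = (Fintype.card ι - 1) • ∑ i, a i := by
  rw [Finset.sum_comm' (t' := univ) (s' := fun i => univ.erase i) (by simp [eq_comm])]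
  simp only [sum_const, card_erase_of_mem (mem_univ _), card_univ, smul_sum]

variable {Y S ι : Type*} [MeasurableSpace Y] [Fintype ι] [DecidableEq ι] [MeasurableSpace ι]
  {μ : Measure (X × Y)} {a : ι → X × Y → ℝ≥0∞}

/-- The multi-class distribution (of arbitrary mass) encoding the cost-sensitive problem in which
action `i` incurs the loss `a i`: label `j` carries the total loss of all the other actions. -/
noncomputable def competingLossMeasure (μ : Measure (X × Y)) (a : ι → X × Y → ℝ≥0∞) :
    Measure (X × ι) :=
  ∑ j, (μ.withDensity fun z => ∑ i ∈ univ.erase j, a i z).map fun z => (z.1, j)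

theorem lintegral_competingLossMeasure (ha : ∀ i, Measurable (a i)) {f : X × ι → ℝ≥0∞}
    (hf : Measurable f) :
    ∫⁻ p, f p ∂competingLossMeasure μ a
      = ∫⁻ z, ∑ j, (∑ i ∈ univ.erase j, a i z) * f (z.1, j) ∂μ := by
  have hlabel (j : ι) : Measurable fun z : X × Y => (z.1, j) := by fun_prop
  have hweight (j : ι) : Measurable fun z => ∑ i ∈ univ.erase j, a i z :=
    Finset.measurable_fun_sum _ fun i _ => ha i
  have hterm (j : ι) : Measurable fun z => (∑ i ∈ univ.erase j, a i z) * f (z.1, j) :=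
    (hweight j).mul (hf.comp (hlabel j))
  rw [competingLossMeasure, lintegral_finsetSum_measure, lintegral_finsetSum _ fun j _ => hterm j]
  refine sum_congr rfl fun j _ => ?_
  rw [lintegral_map hf (hlabel j)]
  exact lintegral_withDensity_eq_lintegral_mul _ (hweight j) (hf.comp (hlabel j))

theorem competingLossMeasure_univ (ha : ∀ i, Measurable (a i)) :
    competingLossMeasure μ a Set.univ
      = (Fintype.card ι - 1 : ℕ) * ∫⁻ z, ∑ i, a i z ∂μ := by
  rw [← lintegral_one, lintegral_competingLossMeasure ha measurable_const]
  simp only [mul_one, sum_sum_erase_eq_nsmul, nsmul_eq_mul]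
  exact lintegral_const_mul _ (Finset.measurable_fun_sum _ fun i _ => ha i)

variable [MeasurableSpace S] {r : X → S}

theorem surrogateRisk_competingLossMeasure (ha : ∀ i, Measurable (a i)) {ℓ : S → ι → ℝ≥0∞}
    (hℓ : Measurable fun p : S × ι => ℓ p.1 p.2) (hr : Measurable r) :
    surrogateRisk ℓ (competingLossMeasure μ a) r
      = ∫⁻ z, ∑ j, (∑ i ∈ univ.erase j, a i z) * ℓ (r z.1) j ∂μ :=
  lintegral_competingLossMeasure ha
    (hℓ.comp ((hr.comp measurable_fst).prodMk measurable_snd))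

variable [MeasurableSingletonClass ι] {sel : S → ι}

theorem zeroOneRisk_competingLossMeasure_add (ha : ∀ i, Measurable (a i)) (hsel : Measurable sel)
    (hr : Measurable r) :
    zeroOneRisk sel (competingLossMeasure μ a) r + ∫⁻ z, ∑ i, a i z ∂μ
      = ∫⁻ z, a (sel (r z.1)) z ∂μ + competingLossMeasure μ a Set.univ := by
  have hloss : Measurable fun z : X × Y => a (sel (r z.1)) z :=
    (measurable_from_prod_countable_right (f := fun p : ι × X × Y => a p.1 p.2) ha).comp
      ((hsel.comp (hr.comp measurable_fst)).prodMk measurable_id)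
  have herr : MeasurableSet {p : X × ι | sel (r p.1) ≠ p.2} :=
    (measurableSet_eq_fun (hsel.comp (hr.comp measurable_fst)) measurable_snd).compl
  have hcorrect : competingLossMeasure μ a {p | sel (r p.1) ≠ p.2}ᶜ
      = ∫⁻ z, ∑ i ∈ univ.erase (sel (r z.1)), a i z ∂μ := by
    rw [← lintegral_indicator_one herr.compl,
      lintegral_competingLossMeasure ha (measurable_one.indicator herr.compl)]
    simp [Set.indicator]
  have hsplit (z : X × Y) : a (sel (r z.1)) z + ∑ i ∈ univ.erase (sel (r z.1)), a i z
      = ∑ i, a i z := add_sum_erase univ (a · z) (mem_univ _)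
  calc zeroOneRisk sel (competingLossMeasure μ a) r + ∫⁻ z, ∑ i, a i z ∂μ
      = zeroOneRisk sel (competingLossMeasure μ a) r
          + (∫⁻ z, a (sel (r z.1)) z ∂μ
            + competingLossMeasure μ a {p | sel (r p.1) ≠ p.2}ᶜ) := by
        simp only [hcorrect, ← lintegral_add_left hloss, hsplit]
    _ = ∫⁻ z, a (sel (r z.1)) z ∂μ + competingLossMeasure μ a Set.univ := by
        rw [zeroOneRisk, ← measure_add_measure_compl herr, add_left_comm]

theorem excess_zeroOneRisk_competingLossMeasure (ha : ∀ i, Measurable (a i))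
    (hfin : ∫⁻ z, ∑ i, a i z ∂μ ≠ ∞) (hsel : Measurable sel) (hr : Measurable r) :
    excess (zeroOneRisk sel (competingLossMeasure μ a)) r
      = excess (fun r => ∫⁻ z, a (sel (r z.1)) z ∂μ) r := by
  have hmass : competingLossMeasure μ a Set.univ ≠ ∞ := by
    rw [competingLossMeasure_univ ha]
    exact ENNReal.mul_ne_top (ENNReal.natCast_ne_top _) hfin
  rw [← excess_add_const hfin, ← excess_add_const (R := fun r => ∫⁻ z, a (sel (r z.1)) z ∂μ) hmass]
  exact excess_congr hr fun _ => zeroOneRisk_competingLossMeasure_add ha hsel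

theorem HasExcessErrorBound.costSensitive_excess_le {ℓ : S → ι → ℝ≥0∞} {α : ℝ} (hα : 0 ≤ α)
    {β : ℝ≥0∞} (hbound : HasExcessErrorBound X sel ℓ α β) (ha : ∀ i, Measurable (a i))
    (hfin : ∫⁻ z, ∑ i, a i z ∂μ ≠ ∞) (hsel : Measurable sel)
    (hℓ : Measurable fun p : S × ι => ℓ p.1 p.2) (hr : Measurable r) :
    excess (fun r => ∫⁻ z, a (sel (r z.1)) z ∂μ) r
      ≤ ((Fintype.card ι - 1 : ℕ) * ∫⁻ z, ∑ i, a i z ∂μ) ^ (1 - α) * β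
        * excess (fun r => ∫⁻ z, ∑ j, (∑ i ∈ univ.erase j, a i z) * ℓ (r z.1) j ∂μ) r ^ α := by
  have hmass := competingLossMeasure_univ (μ := μ) ha
  have : IsFiniteMeasure (competingLossMeasure μ a) :=
    ⟨by rw [hmass]; exact ENNReal.mul_lt_top (ENNReal.natCast_lt_top _) hfin.lt_top⟩
  rw [← excess_zeroOneRisk_competingLossMeasure ha hfin hsel hr, ← hmass,
    ← excess_congr hr fun _ => surrogateRisk_competingLossMeasure ha hℓ]
  exact hbound.excess_le_of_isFiniteMeasure hα _ hr

end CostSensitive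

section Deferral

/-- The losses of the `n + 1` actions available in deferral: action `0` predicts with `h`, action
`j.succ` consults expert `j` at cost `c j`. -/
def actionLoss {X Y P V : Type*} {n : ℕ} (L : P → Y → V) (c : Fin n → X × Y → V) (h : X → P) :
    Fin (n + 1) → X × Y → V :=
  Fin.cons (α := fun _ => X × Y → V) (fun z => L (h z.1) z.2) c

variable {Y P : Type*} [MeasurableSpace Y] [MeasurableSpace P] {n : ℕ}
  {L : P → Y → ℝ≥0∞} {c : Fin n → X × Y → ℝ≥0∞} {h h' : X → P}

theorem measurable_loss (hL : Measurable fun p : P × Y => L p.1 p.2) (hh : Measurable h) :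
    Measurable fun z : X × Y => L (h z.1) z.2 :=
  hL.comp ((hh.comp measurable_fst).prodMk measurable_snd)

theorem measurable_actionLoss (hL : Measurable fun p : P × Y => L p.1 p.2)
    (hc : ∀ j, Measurable (c j)) (hh : Measurable h) (i : Fin (n + 1)) :
    Measurable (actionLoss L c h i) :=
  Fin.cases (measurable_loss hL hh) hc i

theorem lintegral_actionLoss_le_add_excess {μ : Measure (X × Y)}
    (hL : Measurable fun p : P × Y => L p.1 p.2) (hh : Measurable h) (hh' : Measurable h')
    (hfin : ∫⁻ z, L (h z.1) z.2 ∂μ ≠ ∞) {k : X → Fin (n + 1)} (hk : Measurable k) :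
    ∫⁻ z, actionLoss L c h (k z.1) z ∂μ
      ≤ ∫⁻ z, actionLoss L c h' (k z.1) z ∂μ
        + excess (fun h => ∫⁻ z, L (h z.1) z.2 ∂μ) h := by
  set bestRisk := ⨅ (g : X → P) (_ : Measurable g), ∫⁻ z, L (g z.1) z.2 ∂μ
  have hbest : bestRisk ≠ ∞ := ne_top_of_le_ne_top hfin (iInf₂_le h hh)
  set g : X → P := fun x => if k x = 0 then h' x else h x
  have hg : Measurable g := Measurable.ite (hk (measurableSet_singleton 0)) hh' hh
  have hswap (z : X × Y) : actionLoss L c h (k z.1) z + L (g z.1) z.2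
      = actionLoss L c h' (k z.1) z + L (h z.1) z.2 := by
    by_cases hz : k z.1 = 0
    · simp [g, hz, actionLoss, add_comm]
    · obtain ⟨j, hj⟩ := Fin.exists_succ_eq.mpr hz
      simp [g, ← hj, actionLoss]
  refine (ENNReal.add_le_add_iff_right hbest).mp ?_
  calc ∫⁻ z, actionLoss L c h (k z.1) z ∂μ + bestRisk
      ≤ ∫⁻ z, actionLoss L c h (k z.1) z ∂μ + ∫⁻ z, L (g z.1) z.2 ∂μ := by
        gcongr; exact iInf₂_le g hg
    _ = ∫⁻ z, actionLoss L c h' (k z.1) z ∂μ + ∫⁻ z, L (h z.1) z.2 ∂μ := by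
        rw [← lintegral_add_right _ (measurable_loss hL hg),
          ← lintegral_add_right _ (measurable_loss hL hh)]
        simp only [hswap]
    _ = ∫⁻ z, actionLoss L c h' (k z.1) z ∂μ
          + excess (fun h => ∫⁻ z, L (h z.1) z.2 ∂μ) h + bestRisk := by
        rw [add_assoc, excess_add_iInf hh]

theorem two_stage_full_excess_error_bound_general {S : Type*} [MeasurableSpace S]
    {μ : Measure (X × Y)} (hL : Measurable fun p : P × Y => L p.1 p.2)
    (hc : ∀ j, Measurable (c j)) {sel : S → Fin (n + 1)} (hsel : Measurable sel)
    {ℓ : S → Fin (n + 1) → ℝ≥0∞} (hℓ : Measurable fun p : S × Fin (n + 1) => ℓ p.1 p.2)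
    {α : ℝ} (hα : α ∈ Set.Icc (0 : ℝ) 1) {β : ℝ≥0∞} (hbound : HasExcessErrorBound X sel ℓ α β)
    (hh : Measurable h) {B : ℝ≥0∞} (hB : B ≠ ∞) (hle : ∫⁻ z, ∑ i, actionLoss L c h i z ∂μ ≤ B)
    {r : X → S} (hr : Measurable r) :
    ∫⁻ z, actionLoss L c h (sel (r z.1)) z ∂μ
        - (⨅ (h' : X → P) (_ : Measurable h') (r' : X → S) (_ : Measurable r'),
            ∫⁻ z, actionLoss L c h' (sel (r' z.1)) z ∂μ)
      ≤ excess (fun h => ∫⁻ z, L (h z.1) z.2 ∂μ) h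
        + (n * B) ^ (1 - α) * β
          * excess (fun r => ∫⁻ z, ∑ j, (∑ i ∈ univ.erase j, actionLoss L c h i z)
              * ℓ (r z.1) j ∂μ) r ^ α := by
  have hfin : ∫⁻ z, ∑ i, actionLoss L c h i z ∂μ ≠ ∞ := ne_top_of_le_ne_top hB hle
  have hLfin : ∫⁻ z, L (h z.1) z.2 ∂μ ≠ ∞ := ne_top_of_le_ne_top hfin <|
    lintegral_mono fun z => single_le_sum (f := fun i => actionLoss L c h i z)
      (fun _ _ => zero_le) (mem_univ 0)
  set predictorExcess := excess (fun h => ∫⁻ z, L (h z.1) z.2 ∂μ) h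
  set surrogateExcess := excess (fun r => ∫⁻ z, ∑ j, (∑ i ∈ univ.erase j, actionLoss L c h i z)
    * ℓ (r z.1) j ∂μ) r
  set deferralExcess := excess (fun r => ∫⁻ z, actionLoss L c h (sel (r z.1)) z ∂μ) r
  have hdeferral : deferralExcess ≤ (n * B) ^ (1 - α) * β * surrogateExcess ^ α := by
    refine (hbound.costSensitive_excess_le hα.1 (measurable_actionLoss hL hc hh) hfin
      hsel hℓ hr).trans ?_
    rw [Fintype.card_fin, Nat.add_sub_cancel]
    gcongr
    exact sub_nonneg.mpr hα.2
  rw [tsub_le_iff_right]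
  simp only [ENNReal.add_iInf]
  refine le_iInf₂ fun h' hh' => le_iInf₂ fun r' hr' => ?_
  calc ∫⁻ z, actionLoss L c h (sel (r z.1)) z ∂μ
      ≤ deferralExcess + ∫⁻ z, actionLoss L c h (sel (r' z.1)) z ∂μ := le_excess_add hr'
    _ ≤ (n * B) ^ (1 - α) * β * surrogateExcess ^ α
          + (∫⁻ z, actionLoss L c h' (sel (r' z.1)) z ∂μ + predictorExcess) := by
        gcongr
        exact lintegral_actionLoss_le_add_excess hL hh hh' hLfin (hsel.comp hr')
    _ = predictorExcess + (n * B) ^ (1 - α) * β * surrogateExcess ^ α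
          + ∫⁻ z, actionLoss L c h' (sel (r' z.1)) z ∂μ := by ring

end Deferral

section RealLosses

variable {X : Type*} {nE : ℕ} {L : ℝ → ℝ → ℝ} {c : Fin nE → X × ℝ → ℝ}

theorem ofReal_defLoss (sel : (Fin (nE + 1) → ℝ) → Fin (nE + 1)) (h : X → ℝ)
    (r : X → Fin (nE + 1) → ℝ) (z : X × ℝ) :
    ENNReal.ofReal (defLoss nE L c sel h r z)
      = actionLoss (fun y' y => ENNReal.ofReal (L y' y)) (fun j z => ENNReal.ofReal (c j z)) h
          (sel (r z.1)) z := by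
  unfold defLoss
  cases sel (r z.1) using Fin.cases <;> simp [actionLoss, (Fin.succ_ne_zero _).symm]

theorem sum_univ_erase_zero {n : ℕ} {M : Type*} [AddCommMonoid M] (a : Fin (n + 1) → M) :
    ∑ i ∈ univ.erase 0, a i = ∑ i : Fin n, a i.succ := by
  simp [← filter_ne', sum_filter, Fin.sum_univ_succ]

theorem sum_univ_erase_succ {n : ℕ} {M : Type*} [AddCommMonoid M] (a : Fin (n + 1) → M)
    (j : Fin n) :
    ∑ i ∈ univ.erase j.succ, a i = a 0 + ∑ i ∈ univ.erase j, a i.succ := by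
  simp [← filter_ne', sum_filter, Fin.sum_univ_succ, (Fin.succ_ne_zero _).symm]

theorem ofReal_surLossTS (hL : ∀ y' y, 0 ≤ L y' y) (hc : ∀ j z, 0 ≤ c j z)
    {ℓ : (Fin (nE + 1) → ℝ) → Fin (nE + 1) → ℝ} (hℓ : ∀ s j, 0 ≤ ℓ s j) (h : X → ℝ)
    (r : X → Fin (nE + 1) → ℝ) (z : X × ℝ) :
    ENNReal.ofReal (surLossTS nE L c ℓ h r z)
      = ∑ j, (∑ i ∈ univ.erase j, actionLoss (fun y' y => ENNReal.ofReal (L y' y))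
          (fun j z => ENNReal.ofReal (c j z)) h i z) * ENNReal.ofReal (ℓ (r z.1) j) := by
  have hcsum (s : Finset (Fin nE)) : 0 ≤ ∑ j ∈ s, c j z := sum_nonneg fun j _ => hc j z
  have hweight (j : Fin nE) : 0 ≤ L (h z.1) z.2 + ∑ i ∈ univ.erase j, c i z :=
    add_nonneg (hL _ _) (hcsum _)
  have hterm (j : Fin nE) :
      0 ≤ (L (h z.1) z.2 + ∑ i ∈ univ.erase j, c i z) * ℓ (r z.1) j.succ :=
    mul_nonneg (hweight j) (hℓ _ _)
  simp only [surLossTS, Fin.sum_univ_succ, sum_univ_erase_zero, sum_univ_erase_succ,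
    actionLoss, Fin.cons_zero, Fin.cons_succ]
  rw [ENNReal.ofReal_add (mul_nonneg (hcsum _) (hℓ _ _)) (sum_nonneg fun j _ => hterm j),
    ENNReal.ofReal_mul (hcsum _), ENNReal.ofReal_sum_of_nonneg fun j _ => hc j z,
    ENNReal.ofReal_sum_of_nonneg fun j _ => hterm j]
  simp only [ENNReal.ofReal_mul (hweight _), ENNReal.ofReal_add (hL _ _) (hcsum _),
    ENNReal.ofReal_sum_of_nonneg fun j _ => hc j z]

theorem lintegral_sum_actionLoss_le [MeasurableSpace X] {μ : Measure (X × ℝ)}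
    [IsProbabilityMeasure μ] {lbar : ℝ} (hlbar : 0 ≤ lbar) {C : Fin nE → ℝ} (hC : ∀ j, 0 ≤ C j)
    (hL : ∀ y' y, L y' y ≤ lbar) (hc : ∀ j z, c j z ≤ C j) (h : X → ℝ) :
    ∫⁻ z, ∑ i, actionLoss (fun y' y => ENNReal.ofReal (L y' y))
        (fun j z => ENNReal.ofReal (c j z)) h i z ∂μ
      ≤ ENNReal.ofReal (lbar + ∑ j, C j) := by
  rw [ENNReal.ofReal_add hlbar (sum_nonneg fun j _ => hC j),
    ENNReal.ofReal_sum_of_nonneg fun j _ => hC j]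
  refine (lintegral_mono fun z => ?_).trans_eq
    (by rw [lintegral_const, measure_univ, mul_one] :
      ∫⁻ _, ENNReal.ofReal lbar + ∑ j, ENNReal.ofReal (C j) ∂μ = _)
  rw [Fin.sum_univ_succ]
  exact add_le_add (ENNReal.ofReal_le_ofReal (hL _ _))
    (sum_le_sum fun j _ => ENNReal.ofReal_le_ofReal (hc j z))

theorem ofReal_rpow_mul_nat_mul {B s : ℝ} (hB : 0 ≤ B) (hs : 0 ≤ s) (n : ℕ) (β : ℝ) :
    ENNReal.ofReal ((n * B) ^ s * β) = (n * ENNReal.ofReal B) ^ s * ENNReal.ofReal β := by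
  have hnB : 0 ≤ n * B := by positivity
  rw [ENNReal.ofReal_mul (by positivity), ← ENNReal.ofReal_rpow_of_nonneg hnB hs,
    ENNReal.ofReal_mul n.cast_nonneg, ENNReal.ofReal_natCast]

end RealLosses

/-- Corollary 4.4: excess error bound for the full two-stage method. -/
theorem two_stage_full_excess_error_bound {X : Type*} [MeasurableSpace X]
    (nE : ℕ) (hnE : 1 ≤ nE)
    (lbar : ℝ) (hlbar : 0 < lbar)
    (C : Fin nE → ℝ) (hC : ∀ j, 0 < C j)
    (L : ℝ → ℝ → ℝ) (hLmeas : Measurable fun p : ℝ × ℝ => L p.1 p.2)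
    (hL : ∀ y' y, L y' y ∈ Set.Icc 0 lbar)
    (c : Fin nE → X × ℝ → ℝ) (hcmeas : ∀ j, Measurable (c j))
    (hc : ∀ j z, c j z ∈ Set.Ioc 0 (C j))
    (sel : (Fin (nE + 1) → ℝ) → Fin (nE + 1)) (hselmeas : Measurable sel)
    (hsel : ∀ (s : Fin (nE + 1) → ℝ) (j : Fin (nE + 1)), s j ≤ s (sel s))
    (ℓ : (Fin (nE + 1) → ℝ) → Fin (nE + 1) → ℝ)
    (hℓmeas : Measurable fun p : (Fin (nE + 1) → ℝ) × Fin (nE + 1) => ℓ p.1 p.2)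
    (hℓ0 : ∀ s j, 0 ≤ ℓ s j)
    (hℓ1 : ∀ s j, j ≠ sel s → 1 ≤ ℓ s j)
    (α β : ℝ) (hα : α ∈ Set.Ioc (0 : ℝ) 1) (hβ : 0 < β)
    (hcons : ∀ ν : Measure (X × Fin (nE + 1)), IsProbabilityMeasure ν →
      ∀ r : X → Fin (nE + 1) → ℝ, Measurable r →
        E01 nE sel ν r
            - (⨅ (r' : X → Fin (nE + 1) → ℝ) (_ : Measurable r'), E01 nE sel ν r')
          ≤ ENNReal.ofReal β *
            (Eell nE ℓ ν r
              - ⨅ (r' : X → Fin (nE + 1) → ℝ) (_ : Measurable r'), Eell nE ℓ ν r') ^ α)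
    (μ : Measure (X × ℝ)) [IsProbabilityMeasure μ]
    (h : X → ℝ) (hh : Measurable h)
    (r : X → Fin (nE + 1) → ℝ) (hr : Measurable r) :
    genErr μ (defLoss nE L c sel h r)
        - (⨅ (h' : X → ℝ) (_ : Measurable h') (r' : X → Fin (nE + 1) → ℝ)
            (_ : Measurable r'), genErr μ (defLoss nE L c sel h' r'))
      ≤ (genErr μ (fun z => L (h z.1) z.2)
            - ⨅ (h' : X → ℝ) (_ : Measurable h'), genErr μ (fun z => L (h' z.1) z.2))
        + ENNReal.ofReal (((nE : ℝ) * (lbar + ∑ j, C j)) ^ (1 - α) * β) *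
            (genErr μ (surLossTS nE L c ℓ h r)
              - ⨅ (r' : X → Fin (nE + 1) → ℝ) (_ : Measurable r'),
                  genErr μ (surLossTS nE L c ℓ h r')) ^ α := by
  have hL0 y' y := (hL y' y).1
  have hc0 j z := (hc j z).1.le
  have hB : 0 ≤ lbar + ∑ j, C j := add_nonneg hlbar.le (sum_nonneg fun j _ => (hC j).le)
  simp only [genErr, ofReal_defLoss, ofReal_surLossTS hL0 hc0 hℓ0,
    ofReal_rpow_mul_nat_mul hB (sub_nonneg.mpr hα.2)]
  exact two_stage_full_excess_error_bound_general (β := ENNReal.ofReal β)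
    (ℓ := fun s j => ENNReal.ofReal (ℓ s j)) hLmeas.ennreal_ofReal
    (fun j => (hcmeas j).ennreal_ofReal) hselmeas hℓmeas.ennreal_ofReal (Set.Ioc_subset_Icc_self hα)
    hcons hh ENNReal.ofReal_ne_top
    (lintegral_sum_actionLoss_le hlbar.le (fun j => (hC j).le) (fun y' y => (hL y' y).2)
      (fun j z => (hc j z).2) h) hr
end

section
/- (Corollary 4.4, logistic instance.) Let ℓ_log(s,j) = log₂(Σ_{k=0}^{n_e} e^{s_k − s_j}). Then for every probability measure μ on X×ℝ, every measurable predictor h : X → ℝ and every measurable deferral function r : X → ℝ^{n_e+1}, E_{L_def}(h,r) − E*_{L_def} ≤ (E_L(h) − inf_{h' measurable} E_L(h')) + √(2·n_e)·(l̄ + Σ_{j=1}^{n_e} C_j)^{1/2}·(E_{L^h_{ℓ_log}}(r) − inf_{r' measurable} E_{L^h_{ℓ_log}}(r'))^{1/2}, where E_L(h) = ∫ L(h(x),y) dμ(x,y) and L^h_{ℓ_log} is the two-stage surrogate built from ℓ_log with h fixed. -/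
open MeasureTheory Finset ENNReal

variable {X : Type*}

variable [MeasurableSpace X]

/-- The multinomial logistic loss `ℓ_log(s,j) = log₂(Σ_k e^{s_k − s_j})` on score vectors. -/
noncomputable def ellLog (nE : ℕ) (s : Fin (nE + 1) → ℝ) (j : Fin (nE + 1)) : ℝ :=
  Real.logb 2 (∑ k, Real.exp (s k - s j))

/-!
The two stages are separated by `inf_r' E_def(h, r')`.

For a fixed predictor `h`, deferral is cost-sensitive classification with costs
`a = (L(h(x), y), c_1, …, c_nE)`, and the surrogate weights `ellLog · k` by `∑ i, a i - a k`. To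
compare `r` with a competing class assignment, move score mass `log 2 * t` from the class `i` chosen
by `r` to the competing class `j`. As `i` has the larger score, this raises log-sum-exp by at most
`(log 2 * t) ^ 2 / 2`, so the surrogate falls by at least `t * (a i - a j)` up to an error quadratic
in `t`. Integrating and optimizing over `t` gives the square root.

For the predictor stage, follow the competing predictor where `r'` keeps the instance and `h`
elsewhere: the change in prediction error is then exactly the change in deferral loss.
-/

section LogSumExp

variable {ι : Type*} [Fintype ι]

/-- The log-sum-exp function `log ∑ i, exp (s i)` of a score vector, the potential of the logistic
loss. -/
noncomputable def logSumExp (s : ι → ℝ) : ℝ :=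
  Real.log (∑ i, Real.exp (s i))

/-- The score vector obtained from `s` by moving the amount `t` from class `i` to class `j`; it is
`s` itself if `i = j`. -/
def transfer [DecidableEq ι] (i j : ι) (t : ℝ) (s : ι → ℝ) : ι → ℝ :=
  s + Pi.single j t - Pi.single i t

lemma sum_exp_pos [Nonempty ι] (s : ι → ℝ) : 0 < ∑ k, Real.exp (s k) :=
  sum_pos (fun k _ => Real.exp_pos (s k)) univ_nonempty

variable [DecidableEq ι]

lemma dotProduct_transfer (w : ι → ℝ) (i j : ι) (t : ℝ) (s : ι → ℝ) :
    w ⬝ᵥ transfer i j t s = w ⬝ᵥ s + t * (w j - w i) := by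
  simp only [transfer, dotProduct_sub, dotProduct_add, dotProduct_single]
  ring

lemma sum_exp_transfer {i j : ι} (hij : i ≠ j) (t : ℝ) (s : ι → ℝ) :
    ∑ k, Real.exp (transfer i j t s k)
      = ∑ k, Real.exp (s k) + Real.exp (s j) * (Real.exp t - 1)
        + Real.exp (s i) * (Real.exp (-t) - 1) := by
  have exp_transfer : ∀ k, Real.exp (transfer i j t s k) = Real.exp (s k)
      + (Pi.single j (Real.exp (s j) * (Real.exp t - 1)) : ι → ℝ) k
      + (Pi.single i (Real.exp (s i) * (Real.exp (-t) - 1)) : ι → ℝ) k := by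
    intro k
    rcases eq_or_ne k i with rfl | hki
    · simp only [transfer, Pi.sub_apply, Pi.add_apply, ne_eq, hij, not_false_eq_true,
        Pi.single_eq_of_ne, Pi.single_eq_same, sub_eq_add_neg, add_zero, Real.exp_add]
      ring
    rcases eq_or_ne k j with rfl | hkj
    · simp only [transfer, Pi.sub_apply, Pi.add_apply, ne_eq, hki, not_false_eq_true,
        Pi.single_eq_of_ne, Pi.single_eq_same, sub_zero, add_zero, Real.exp_add]
      ring
    · simp [transfer, hki, hkj]
  simp only [exp_transfer, sum_add_distrib, sum_pi_single', mem_univ, if_true]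

lemma mul_exp_add_mul_exp_neg_le {p q t : ℝ} (hq : 0 ≤ q) (hqp : q ≤ p) (ht : 0 ≤ t) :
    q * Real.exp t + p * Real.exp (-t) ≤ (p + q) * Real.exp (t ^ 2 / 2) := by
  have hexp : Real.exp (-t) ≤ Real.exp t := Real.exp_le_exp.2 (by linarith)
  calc q * Real.exp t + p * Real.exp (-t)
      ≤ (p + q) * Real.cosh t := by
        rw [Real.cosh_eq]
        nlinarith [mul_nonneg (sub_nonneg.2 hqp) (sub_nonneg.2 hexp)]
    _ ≤ (p + q) * Real.exp (t ^ 2 / 2) :=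
        mul_le_mul_of_nonneg_left (Real.cosh_le_exp_half_sq t) (by linarith)

lemma sum_exp_transfer_le {i j : ι} {s : ι → ℝ} (hs : s j ≤ s i) {t : ℝ} (ht : 0 ≤ t) :
    ∑ k, Real.exp (transfer i j t s k) ≤ (∑ k, Real.exp (s k)) * Real.exp (t ^ 2 / 2) := by
  have one_le_exp : 1 ≤ Real.exp (t ^ 2 / 2) := Real.one_le_exp (by positivity)
  rcases eq_or_ne i j with rfl | hij
  · rw [transfer, add_sub_cancel_right]
    exact le_mul_of_one_le_right (sum_nonneg fun k _ => (Real.exp_pos _).le) one_le_exp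
  · have pair_le : Real.exp (s i) + Real.exp (s j) ≤ ∑ k, Real.exp (s k) :=
      add_le_sum (fun k _ => (Real.exp_pos _).le) (mem_univ i) (mem_univ j) hij
    have exchange :=
      mul_exp_add_mul_exp_neg_le (Real.exp_pos (s j)).le (Real.exp_le_exp.2 hs) ht
    rw [sum_exp_transfer hij]
    nlinarith [mul_le_mul_of_nonneg_right pair_le (sub_nonneg.2 one_le_exp)]

lemma logSumExp_transfer_le {i j : ι} {s : ι → ℝ} (hs : s j ≤ s i) {t : ℝ} (ht : 0 ≤ t) :
    logSumExp (transfer i j t s) ≤ logSumExp s + t ^ 2 / 2 := by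
  have : Nonempty ι := ⟨i⟩
  rw [logSumExp, logSumExp, ← Real.log_exp (t ^ 2 / 2),
    ← Real.log_mul (sum_exp_pos s).ne' (Real.exp_ne_zero _)]
  exact Real.log_le_log (sum_exp_pos _) (sum_exp_transfer_le hs ht)

end LogSumExp

section CostSensitive

variable {nE : ℕ}

lemma ellLog_nonneg (s : Fin (nE + 1) → ℝ) (j : Fin (nE + 1)) : 0 ≤ ellLog nE s j := by
  refine Real.logb_nonneg one_lt_two ?_
  calc (1 : ℝ) = Real.exp (s j - s j) := by rw [sub_self, Real.exp_zero]
    _ ≤ ∑ k, Real.exp (s k - s j) :=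
      single_le_sum (f := fun k => Real.exp (s k - s j)) (fun k _ => (Real.exp_pos _).le)
        (mem_univ j)

lemma log_two_mul_ellLog (s : Fin (nE + 1) → ℝ) (j : Fin (nE + 1)) :
    Real.log 2 * ellLog nE s j = logSumExp s - s j := by
  rw [ellLog, Real.logb, mul_div_cancel₀ _ (Real.log_pos one_lt_two).ne', logSumExp]
  simp only [Real.exp_sub]
  rw [← sum_div, Real.log_div (sum_exp_pos s).ne' (Real.exp_ne_zero _), Real.log_exp]

/-- The cost-sensitive logistic surrogate for the cost vector `a`: the logistic loss of class `k` is
weighted by the total cost of the other classes. -/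
noncomputable def costLogistic (a s : Fin (nE + 1) → ℝ) : ℝ :=
  ∑ k, (∑ i, a i - a k) * ellLog nE s k

lemma costLogistic_nonneg {a : Fin (nE + 1) → ℝ} (ha : ∀ i, 0 ≤ a i) (s : Fin (nE + 1) → ℝ) :
    0 ≤ costLogistic a s :=
  sum_nonneg fun k _ => mul_nonneg
    (sub_nonneg.2 (single_le_sum (fun i _ => ha i) (mem_univ k))) (ellLog_nonneg s k)

lemma costLogistic_le {a : Fin (nE + 1) → ℝ} (ha : ∀ i, 0 ≤ a i) {B : ℝ} (haB : ∑ i, a i ≤ B)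
    (s : Fin (nE + 1) → ℝ) : costLogistic a s ≤ B * ∑ k, ellLog nE s k := by
  rw [costLogistic, mul_sum]
  refine sum_le_sum fun k _ => mul_le_mul_of_nonneg_right ?_ (ellLog_nonneg s k)
  linarith [ha k]

lemma log_two_mul_costLogistic (a s : Fin (nE + 1) → ℝ) :
    Real.log 2 * costLogistic a s
      = nE * (∑ i, a i) * logSumExp s - (fun k => ∑ i, a i - a k) ⬝ᵥ s := by
  have weight_sum : ∑ k, (∑ i, a i - a k) = nE * ∑ i, a i := by
    rw [sum_sub_distrib, sum_const, card_univ, Fintype.card_fin, nsmul_eq_mul]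
    push_cast
    ring
  simp only [costLogistic, mul_sum, mul_left_comm (Real.log 2), log_two_mul_ellLog, mul_sub,
    sum_sub_distrib, dotProduct]
  rw [← sum_mul, weight_sum, mul_sum]

lemma costLogistic_transfer_le {a s : Fin (nE + 1) → ℝ} (ha : 0 ≤ ∑ k, a k)
    {i j : Fin (nE + 1)} (hs : s j ≤ s i) {t : ℝ} (ht : 0 ≤ t) :
    t * a i + costLogistic a (transfer i j (Real.log 2 * t) s)
      ≤ costLogistic a s + t * a j + Real.log 2 * (nE * ∑ k, a k) * (t ^ 2 / 2) := by
  have log_two_pos : 0 < Real.log 2 := Real.log_pos one_lt_two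
  have potential_le := mul_le_mul_of_nonneg_left
    (logSumExp_transfer_le hs (mul_nonneg log_two_pos.le ht)) (mul_nonneg (Nat.cast_nonneg nE) ha)
  refine le_of_mul_le_mul_left ?_ log_two_pos
  rw [mul_add, mul_add, mul_add, log_two_mul_costLogistic, log_two_mul_costLogistic,
    dotProduct_transfer]
  linarith

lemma costLogistic_transfer_le_of_sum_le {a s : Fin (nE + 1) → ℝ} (ha : 0 ≤ ∑ k, a k) {B : ℝ}
    (haB : ∑ k, a k ≤ B) {i j : Fin (nE + 1)} (hs : s j ≤ s i) {t : ℝ} (ht : 0 ≤ t) :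
    t * a i + costLogistic a (transfer i j (Real.log 2 * t) s)
      ≤ t * a j + nE * B * (t ^ 2 / 2) + costLogistic a s := by
  have log_two_le_one : Real.log 2 ≤ 1 := by linarith [Real.log_two_lt_d9]
  have quad_le : Real.log 2 * (nE * ∑ k, a k) * (t ^ 2 / 2) ≤ nE * B * (t ^ 2 / 2) := by
    refine mul_le_mul_of_nonneg_right ?_ (by positivity)
    exact (mul_le_of_le_one_left (by positivity) log_two_le_one).trans
      (mul_le_mul_of_nonneg_left haB nE.cast_nonneg)
  linarith [costLogistic_transfer_le ha hs ht]

end CostSensitive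

section GeneralizationError

variable {W : Type*} [MeasurableSpace W] {μ : Measure W} {f g : W → ℝ}

lemma genErr_mono (hfg : ∀ w, f w ≤ g w) : genErr μ f ≤ genErr μ g :=
  lintegral_mono fun w => ENNReal.ofReal_le_ofReal (hfg w)

lemma genErr_add (hf : ∀ w, 0 ≤ f w) (hg : ∀ w, 0 ≤ g w) (hfm : Measurable f) :
    genErr μ (fun w => f w + g w) = genErr μ f + genErr μ g := by
  simp only [genErr, ENNReal.ofReal_add (hf _) (hg _)]
  exact lintegral_add_left hfm.ennreal_ofReal _

lemma genErr_const_mul {b : ℝ} (hb : 0 ≤ b) (hfm : Measurable f) :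
    genErr μ (fun w => b * f w) = ENNReal.ofReal b * genErr μ f := by
  simp only [genErr, ENNReal.ofReal_mul hb]
  exact lintegral_const_mul _ hfm.ennreal_ofReal

lemma genErr_const (b : ℝ) : genErr μ (fun _ => b) = ENNReal.ofReal b * μ Set.univ :=
  lintegral_const _

lemma genErr_ne_top_of_le [IsFiniteMeasure μ] {b : ℝ} (hf : ∀ w, f w ≤ b) : genErr μ f ≠ ∞ := by
  refine ne_top_of_le_ne_top ?_ (genErr_mono hf)
  rw [genErr_const]
  exact ENNReal.mul_ne_top ENNReal.ofReal_ne_top (measure_ne_top μ _)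

end GeneralizationError

section QuadraticTradeoff

lemma le_sqrt_of_forall_mul_le {M d e : ℝ} (hM : 0 ≤ M) (hd : 0 ≤ d)
    (hquad : ∀ t, 0 ≤ t → t * d ≤ e + M * (t ^ 2 / 2)) : d ≤ √(2 * M * e) := by
  have e_nonneg : 0 ≤ e := by simpa using hquad 0 le_rfl
  have quad_nonneg (t : ℝ) : 0 ≤ M / 2 * (t * t) + -d * t + e := by
    rcases le_total 0 t with ht | ht
    · linarith [hquad t ht]
    · nlinarith [mul_nonneg hM (mul_self_nonneg t), mul_nonneg hd (neg_nonneg.2 ht)]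
  have discrim_nonpos := discrim_le_zero quad_nonneg
  rw [discrim] at discrim_nonpos
  exact Real.le_sqrt_of_sq_le (by linarith)

lemma le_ofReal_sqrt_mul_rpow_of_forall_mul_le {M : ℝ} (hM : 0 < M) {d e : ℝ≥0∞}
    (hquad : ∀ t : ℝ, 0 ≤ t → ENNReal.ofReal t * d ≤ e + ENNReal.ofReal (M * (t ^ 2 / 2))) :
    d ≤ ENNReal.ofReal √(2 * M) * e ^ ((1 : ℝ) / 2) := by
  rcases eq_or_ne e ∞ with rfl | he
  · have sqrt_ne_zero : ENNReal.ofReal √(2 * M) ≠ 0 := by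
      rw [ENNReal.ofReal_ne_zero_iff]
      positivity
    rw [ENNReal.top_rpow_of_pos one_half_pos, ENNReal.mul_top sqrt_ne_zero]
    exact le_top
  have hd : d ≠ ∞ := by
    have d_le := hquad 1 zero_le_one
    rw [ENNReal.ofReal_one, one_mul] at d_le
    exact ne_top_of_le_ne_top (ENNReal.add_ne_top.2 ⟨he, ENNReal.ofReal_ne_top⟩) d_le
  lift d to NNReal using hd
  lift e to NNReal using he
  have real_quad (t : ℝ) (ht : 0 ≤ t) : t * d ≤ e + M * (t ^ 2 / 2) := by
    have := ENNReal.toReal_mono (by finiteness) (hquad t ht)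
    rwa [ENNReal.toReal_mul, ENNReal.toReal_add (by finiteness) (by finiteness),
      ENNReal.toReal_ofReal ht, ENNReal.toReal_ofReal (by positivity)] at this
  rw [← ENNReal.ofReal_coe_nnreal (p := d), ← ENNReal.ofReal_coe_nnreal (p := e),
    ENNReal.ofReal_rpow_of_nonneg e.coe_nonneg one_half_pos.le,
    ← ENNReal.ofReal_mul (by positivity), ← Real.sqrt_eq_rpow, ← Real.sqrt_mul (by positivity)]
  exact ENNReal.ofReal_le_ofReal (le_sqrt_of_forall_mul_le hM.le d.coe_nonneg real_quad)

end QuadraticTradeoff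

section CostSensitiveExcess

variable {X Y : Type*} [MeasurableSpace X] [MeasurableSpace Y] {μ : Measure (X × Y)} {nE : ℕ}
  {a : X × Y → Fin (nE + 1) → ℝ} {B : ℝ} {r : X → Fin (nE + 1) → ℝ} {κ κ' : X → Fin (nE + 1)}

lemma measurable_cost_apply (ha : Measurable a) (hκ : Measurable κ) :
    Measurable fun z : X × Y => a z (κ z.1) := by
  have eval_meas : Measurable fun p : (X × Y) × Fin (nE + 1) => a p.1 p.2 :=
    measurable_from_prod_countable_left fun i => (measurable_pi_apply i).comp ha
  exact eval_meas.comp (measurable_id.prodMk (hκ.comp measurable_fst))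

lemma measurable_transfer (hr : Measurable r) (hκ : Measurable κ) (hκ' : Measurable κ') (t : ℝ) :
    Measurable fun x => transfer (κ x) (κ' x) t (r x) := by
  have single_meas : Measurable fun i : Fin (nE + 1) => (Pi.single i t : Fin (nE + 1) → ℝ) :=
    measurable_of_countable _
  exact (hr.add (single_meas.comp hκ')).sub (single_meas.comp hκ)

lemma iInf_genErr_costLogistic_ne_top [IsFiniteMeasure μ] (ha0 : ∀ z i, 0 ≤ a z i)
    (haB : ∀ z, ∑ i, a z i ≤ B) :
    ⨅ (r' : X → Fin (nE + 1) → ℝ) (_ : Measurable r'),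
      genErr μ (fun z => costLogistic (a z) (r' z.1)) ≠ ∞ := by
  refine ne_top_of_le_ne_top ?_ (iInf₂_le (fun _ => 0) measurable_const)
  exact genErr_ne_top_of_le fun z => costLogistic_le (ha0 z) (haB z) 0

lemma genErr_cost_add_iInf_costLogistic_le (ha : Measurable a) (ha0 : ∀ z i, 0 ≤ a z i)
    (haB : ∀ z, ∑ i, a z i ≤ B) (hr : Measurable r) (hκ : Measurable κ)
    (hκr : ∀ x j, r x j ≤ r x (κ x)) (hκ' : Measurable κ') {t : ℝ} (ht : 0 ≤ t) :
    ENNReal.ofReal t * genErr μ (fun z => a z (κ z.1))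
        + ⨅ (r' : X → Fin (nE + 1) → ℝ) (_ : Measurable r'),
            genErr μ (fun z => costLogistic (a z) (r' z.1))
      ≤ ENNReal.ofReal t * genErr μ (fun z => a z (κ' z.1))
        + ENNReal.ofReal (nE * B * (t ^ 2 / 2)) * μ Set.univ
        + genErr μ (fun z => costLogistic (a z) (r z.1)) := by
  let rt : X → Fin (nE + 1) → ℝ := fun x => transfer (κ x) (κ' x) (Real.log 2 * t) (r x)
  have total_nonneg (z : X × Y) : 0 ≤ ∑ i, a z i := sum_nonneg fun i _ => ha0 z i
  have cost_nonneg (z : X × Y) (i : Fin (nE + 1)) : 0 ≤ t * a z i := mul_nonneg ht (ha0 z i)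
  have quad_nonneg (z : X × Y) : 0 ≤ nE * B * (t ^ 2 / 2) :=
    mul_nonneg (mul_nonneg nE.cast_nonneg ((total_nonneg z).trans (haB z))) (by positivity)
  have cost_meas := measurable_cost_apply ha hκ
  have cost_meas' := measurable_cost_apply ha hκ'
  calc ENNReal.ofReal t * genErr μ (fun z => a z (κ z.1)) + _
      ≤ ENNReal.ofReal t * genErr μ (fun z => a z (κ z.1))
        + genErr μ (fun z => costLogistic (a z) (rt z.1)) := by
        gcongr
        exact iInf₂_le rt (measurable_transfer hr hκ hκ' _)
    _ = genErr μ (fun z => t * a z (κ z.1) + costLogistic (a z) (rt z.1)) := by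
        rw [genErr_add (fun z => cost_nonneg z _) (fun z => costLogistic_nonneg (ha0 z) _)
          (cost_meas.const_mul t), genErr_const_mul ht cost_meas]
    _ ≤ genErr μ (fun z => t * a z (κ' z.1) + nE * B * (t ^ 2 / 2)
          + costLogistic (a z) (r z.1)) :=
        genErr_mono fun z =>
          costLogistic_transfer_le_of_sum_le (total_nonneg z) (haB z) (hκr z.1 (κ' z.1)) ht
    _ = _ := by
        rw [genErr_add (fun z => add_nonneg (cost_nonneg z _) (quad_nonneg z))
            (fun z => costLogistic_nonneg (ha0 z) _) ((cost_meas'.const_mul t).add_const _),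
          genErr_add (fun z => cost_nonneg z _) quad_nonneg (cost_meas'.const_mul t),
          genErr_const_mul ht cost_meas', genErr_const]

lemma genErr_cost_sub_le [IsProbabilityMeasure μ] (hnE : 0 < nE) (hB : 0 < B) (ha : Measurable a)
    (ha0 : ∀ z i, 0 ≤ a z i) (haB : ∀ z, ∑ i, a z i ≤ B) (hr : Measurable r) (hκ : Measurable κ)
    (hκr : ∀ x j, r x j ≤ r x (κ x)) (hκ' : Measurable κ') :
    genErr μ (fun z => a z (κ z.1)) - genErr μ (fun z => a z (κ' z.1))
      ≤ ENNReal.ofReal √(2 * (nE * B)) *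
        (genErr μ (fun z => costLogistic (a z) (r z.1))
          - ⨅ (r' : X → Fin (nE + 1) → ℝ) (_ : Measurable r'),
              genErr μ (fun z => costLogistic (a z) (r' z.1))) ^ ((1 : ℝ) / 2) := by
  have M_pos : 0 < nE * B := mul_pos (Nat.cast_pos.2 hnE) hB
  refine le_ofReal_sqrt_mul_rpow_of_forall_mul_le M_pos fun t ht => ?_
  have exchange := genErr_cost_add_iInf_costLogistic_le (μ := μ) ha ha0 haB hr hκ hκr hκ' ht
  have excess_le := (ENNReal.le_sub_of_add_le_right
    (iInf_genErr_costLogistic_ne_top ha0 haB) exchange).trans add_tsub_le_assoc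
  rw [measure_univ, mul_one, add_assoc] at excess_le
  rw [ENNReal.mul_sub fun _ _ => ENNReal.ofReal_ne_top, tsub_le_iff_left, add_comm (_ - _)]
  exact excess_le

end CostSensitiveExcess

section TwoStage

variable {X : Type*} {nE : ℕ} {L : ℝ → ℝ → ℝ} {c : Fin nE → X × ℝ → ℝ}
  {sel : (Fin (nE + 1) → ℝ) → Fin (nE + 1)} {h : X → ℝ}

/-- The cost vector `(L(h(x),y), c_1(x,y), …, c_{n_e}(x,y))`, indexed by the decision to keep the
instance (`0`) or to defer it to an expert (`j.succ`). -/
def decisionCost (nE : ℕ) (L : ℝ → ℝ → ℝ) (c : Fin nE → X × ℝ → ℝ) (h : X → ℝ) (z : X × ℝ) :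
    Fin (nE + 1) → ℝ :=
  Fin.cons (L (h z.1) z.2) (fun j => c j z)

lemma defLoss_eq_decisionCost (r : X → Fin (nE + 1) → ℝ) :
    defLoss nE L c sel h r = fun z => decisionCost nE L c h z (sel (r z.1)) := by
  funext z
  rw [defLoss, decisionCost]
  cases sel (r z.1) using Fin.cases with
  | zero => simp [(Fin.succ_ne_zero _).symm]
  | succ j => simp [Fin.succ_ne_zero]

lemma surLossTS_eq_costLogistic (r : X → Fin (nE + 1) → ℝ) :
    surLossTS nE L c (ellLog nE) h r
      = fun z => costLogistic (decisionCost nE L c h z) (r z.1) := by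
  funext z
  have total_sub (j : Fin nE) : L (h z.1) z.2 + ∑ j', c j' z - c j z
      = L (h z.1) z.2 + ∑ j' ∈ univ.erase j, c j' z := by
    rw [← add_sum_erase univ (fun j' => c j' z) (mem_univ j)]
    ring
  simp only [surLossTS, costLogistic, decisionCost, Fin.sum_univ_succ, Fin.cons_zero,
    Fin.cons_succ, total_sub, add_sub_cancel_left]

lemma decisionCost_nonneg (hL : ∀ y' y, 0 ≤ L y' y) (hc : ∀ j z, 0 ≤ c j z) (z : X × ℝ)
    (i : Fin (nE + 1)) : 0 ≤ decisionCost nE L c h z i := by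
  cases i using Fin.cases with
  | zero => exact hL _ _
  | succ j => exact hc j z

lemma sum_decisionCost_le {lbar : ℝ} {C : Fin nE → ℝ} (hL : ∀ y' y, L y' y ≤ lbar)
    (hc : ∀ j z, c j z ≤ C j) (z : X × ℝ) :
    ∑ i, decisionCost nE L c h z i ≤ lbar + ∑ j, C j := by
  simp only [decisionCost, Fin.sum_univ_succ, Fin.cons_zero, Fin.cons_succ]
  exact add_le_add (hL _ _) (sum_le_sum fun j _ => hc j z)

/-- The predictor that follows `h'` where the class assignment `κ` keeps the instance, and `h` where
it defers. -/
def splicePredictor (κ : X → Fin (nE + 1)) (h' h : X → ℝ) (x : X) : ℝ :=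
  if κ x = 0 then h' x else h x

lemma defLoss_add_splicePredictor (h' : X → ℝ) (r : X → Fin (nE + 1) → ℝ) (z : X × ℝ) :
    defLoss nE L c sel h r z + L (splicePredictor (fun x => sel (r x)) h' h z.1) z.2
      = defLoss nE L c sel h' r z + L (h z.1) z.2 := by
  simp only [defLoss, splicePredictor]
  split_ifs <;> ring

variable [MeasurableSpace X] {μ : Measure (X × ℝ)} {lbar : ℝ} {r : X → Fin (nE + 1) → ℝ}

lemma measurable_predictionLoss (hLmeas : Measurable fun p : ℝ × ℝ => L p.1 p.2)
    (hh : Measurable h) : Measurable fun z : X × ℝ => L (h z.1) z.2 :=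
  hLmeas.comp ((hh.comp measurable_fst).prodMk measurable_snd)

lemma measurable_decisionCost (hLmeas : Measurable fun p : ℝ × ℝ => L p.1 p.2)
    (hcmeas : ∀ j, Measurable (c j)) (hh : Measurable h) :
    Measurable (decisionCost nE L c h) := by
  refine measurable_pi_iff.2 fun i => ?_
  cases i using Fin.cases with
  | zero => exact measurable_predictionLoss hLmeas hh
  | succ j => exact hcmeas j

lemma measurable_defLoss (hLmeas : Measurable fun p : ℝ × ℝ => L p.1 p.2)
    (hcmeas : ∀ j, Measurable (c j)) (hselmeas : Measurable sel) (hh : Measurable h)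
    (hr : Measurable r) : Measurable (defLoss nE L c sel h r) := by
  rw [defLoss_eq_decisionCost]
  exact measurable_cost_apply (measurable_decisionCost hLmeas hcmeas hh) (hselmeas.comp hr)

lemma measurable_splicePredictor {κ : X → Fin (nE + 1)} (hκ : Measurable κ) {h' : X → ℝ}
    (hh' : Measurable h') (hh : Measurable h) : Measurable (splicePredictor κ h' h) :=
  Measurable.ite (hκ (measurableSet_singleton 0)) hh' hh

lemma deferral_stage_excess_le [IsProbabilityMeasure μ] (hnE : 0 < nE)
    {C : Fin nE → ℝ} (hB : 0 < lbar + ∑ j, C j)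
    (hLmeas : Measurable fun p : ℝ × ℝ => L p.1 p.2) (hL : ∀ y' y, L y' y ∈ Set.Icc 0 lbar)
    (hcmeas : ∀ j, Measurable (c j)) (hc : ∀ j z, c j z ∈ Set.Icc 0 (C j))
    (hselmeas : Measurable sel) (hsel : ∀ (s : Fin (nE + 1) → ℝ) j, s j ≤ s (sel s))
    (hh : Measurable h) (hr : Measurable r) :
    genErr μ (defLoss nE L c sel h r)
        - ⨅ (r' : X → Fin (nE + 1) → ℝ) (_ : Measurable r'), genErr μ (defLoss nE L c sel h r')
      ≤ ENNReal.ofReal √(2 * (nE * (lbar + ∑ j, C j))) *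
        (genErr μ (surLossTS nE L c (ellLog nE) h r)
          - ⨅ (r' : X → Fin (nE + 1) → ℝ) (_ : Measurable r'),
              genErr μ (surLossTS nE L c (ellLog nE) h r')) ^ ((1 : ℝ) / 2) := by
  rw [tsub_le_iff_tsub_le]
  refine le_iInf₂ fun r' hr' => ?_
  rw [tsub_le_iff_tsub_le]
  simp only [defLoss_eq_decisionCost, surLossTS_eq_costLogistic]
  exact genErr_cost_sub_le hnE hB
    (measurable_decisionCost hLmeas hcmeas hh)
    (decisionCost_nonneg (fun y' y => (hL y' y).1) fun j z => (hc j z).1)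
    (sum_decisionCost_le (fun y' y => (hL y' y).2) fun j z => (hc j z).2)
    hr (hselmeas.comp hr) (fun x => hsel (r x)) (hselmeas.comp hr')

lemma genErr_defLoss_le_add_excess [IsFiniteMeasure μ]
    (hLmeas : Measurable fun p : ℝ × ℝ => L p.1 p.2) (hL : ∀ y' y, L y' y ∈ Set.Icc 0 lbar)
    (hcmeas : ∀ j, Measurable (c j)) (hc : ∀ j z, 0 ≤ c j z) (hselmeas : Measurable sel)
    (hh : Measurable h) {h' : X → ℝ} (hh' : Measurable h') (hr : Measurable r) :
    genErr μ (defLoss nE L c sel h r)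
      ≤ genErr μ (defLoss nE L c sel h' r) + (genErr μ (fun z => L (h z.1) z.2)
          - ⨅ (g : X → ℝ) (_ : Measurable g), genErr μ (fun z => L (g z.1) z.2)) := by
  set Lstar := ⨅ (g : X → ℝ) (_ : Measurable g), genErr μ (fun z => L (g z.1) z.2)
  have Lstar_le {g : X → ℝ} (hg : Measurable g) : Lstar ≤ genErr μ (fun z => L (g z.1) z.2) :=
    iInf₂_le g hg
  have Lstar_ne_top : Lstar ≠ ∞ :=
    ne_top_of_le_ne_top (genErr_ne_top_of_le fun z : X × ℝ => (hL (h z.1) z.2).2) (Lstar_le hh)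
  have loss_nonneg (g : X → ℝ) (z : X × ℝ) : 0 ≤ L (g z.1) z.2 := (hL _ _).1
  have defLoss_nonneg (g : X → ℝ) (z : X × ℝ) : 0 ≤ defLoss nE L c sel g r z := by
    rw [defLoss_eq_decisionCost]
    exact decisionCost_nonneg (fun y' y => (hL y' y).1) hc z _
  let g : X → ℝ := splicePredictor (fun x => sel (r x)) h' h
  have g_meas : Measurable g := measurable_splicePredictor (hselmeas.comp hr) hh' hh
  refine (ENNReal.le_sub_of_add_le_right Lstar_ne_top ?_).trans add_tsub_le_assoc
  calc genErr μ (defLoss nE L c sel h r) + Lstar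
      ≤ genErr μ (defLoss nE L c sel h r) + genErr μ (fun z => L (g z.1) z.2) := by
        gcongr
        exact Lstar_le g_meas
    _ = genErr μ (defLoss nE L c sel h' r) + genErr μ (fun z => L (h z.1) z.2) := by
        rw [← genErr_add (defLoss_nonneg h) (loss_nonneg g)
            (measurable_defLoss hLmeas hcmeas hselmeas hh hr),
          ← genErr_add (defLoss_nonneg h') (loss_nonneg h)
            (measurable_defLoss hLmeas hcmeas hselmeas hh' hr)]
        simp only [g, defLoss_add_splicePredictor]

lemma predictor_stage_excess_le [IsFiniteMeasure μ]
    (hLmeas : Measurable fun p : ℝ × ℝ => L p.1 p.2) (hL : ∀ y' y, L y' y ∈ Set.Icc 0 lbar)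
    (hcmeas : ∀ j, Measurable (c j)) (hc : ∀ j z, 0 ≤ c j z) (hselmeas : Measurable sel)
    (hh : Measurable h) :
    (⨅ (r : X → Fin (nE + 1) → ℝ) (_ : Measurable r), genErr μ (defLoss nE L c sel h r))
        - (⨅ (h' : X → ℝ) (_ : Measurable h') (r : X → Fin (nE + 1) → ℝ) (_ : Measurable r),
            genErr μ (defLoss nE L c sel h' r))
      ≤ genErr μ (fun z => L (h z.1) z.2)
          - ⨅ (h' : X → ℝ) (_ : Measurable h'), genErr μ (fun z => L (h' z.1) z.2) := by
  rw [tsub_le_iff_tsub_le]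
  refine le_iInf₂ fun h' hh' => le_iInf₂ fun r hr => tsub_le_iff_right.2 ?_
  exact iInf₂_le_of_le r hr
    (genErr_defLoss_le_add_excess hLmeas hL hcmeas hc hselmeas hh hh' hr)

end TwoStage

/-- Corollary 4.4, logistic instance. -/
theorem two_stage_full_logistic_excess_error_bound {X : Type*} [MeasurableSpace X]
    (nE : ℕ) (hnE : 1 ≤ nE)
    (lbar : ℝ) (hlbar : 0 < lbar)
    (C : Fin nE → ℝ) (hC : ∀ j, 0 < C j)
    (L : ℝ → ℝ → ℝ) (hLmeas : Measurable fun p : ℝ × ℝ => L p.1 p.2)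
    (hL : ∀ y' y, L y' y ∈ Set.Icc 0 lbar)
    (c : Fin nE → X × ℝ → ℝ) (hcmeas : ∀ j, Measurable (c j))
    (hc : ∀ j z, c j z ∈ Set.Ioc 0 (C j))
    (sel : (Fin (nE + 1) → ℝ) → Fin (nE + 1)) (hselmeas : Measurable sel)
    (hsel : ∀ (s : Fin (nE + 1) → ℝ) (j : Fin (nE + 1)), s j ≤ s (sel s))
    (μ : Measure (X × ℝ)) [IsProbabilityMeasure μ]
    (h : X → ℝ) (hh : Measurable h)
    (r : X → Fin (nE + 1) → ℝ) (hr : Measurable r) :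
    genErr μ (defLoss nE L c sel h r)
        - (⨅ (h' : X → ℝ) (_ : Measurable h') (r' : X → Fin (nE + 1) → ℝ)
            (_ : Measurable r'), genErr μ (defLoss nE L c sel h' r'))
      ≤ (genErr μ (fun z => L (h z.1) z.2)
            - ⨅ (h' : X → ℝ) (_ : Measurable h'), genErr μ (fun z => L (h' z.1) z.2))
        + ENNReal.ofReal (Real.sqrt (2 * nE) * (lbar + ∑ j, C j) ^ ((1 : ℝ) / 2)) *
            (genErr μ (surLossTS nE L c (ellLog nE) h r)
              - ⨅ (r' : X → Fin (nE + 1) → ℝ) (_ : Measurable r'),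
                  genErr μ (surLossTS nE L c (ellLog nE) h r')) ^ ((1 : ℝ) / 2) := by
  have hB : 0 < lbar + ∑ j, C j := add_pos_of_pos_of_nonneg hlbar (sum_nonneg fun j _ => (hC j).le)
  have hc' (j : Fin nE) (z : X × ℝ) : c j z ∈ Set.Icc 0 (C j) := Set.Ioc_subset_Icc_self (hc j z)
  have const_eq : √(2 * nE) * (lbar + ∑ j, C j) ^ ((1 : ℝ) / 2)
      = √(2 * (nE * (lbar + ∑ j, C j))) := by
    rw [← Real.sqrt_eq_rpow, ← Real.sqrt_mul (by positivity), mul_assoc]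
  rw [const_eq, add_comm (_ - _)]
  exact tsub_le_tsub_add_tsub.trans <| add_le_add
    (deferral_stage_excess_le hnE hB hLmeas hL hcmeas hc' hselmeas hsel hh hr)
    (predictor_stage_excess_le hLmeas hL hcmeas (fun j z => (hc' j z).1) hselmeas hh)
end
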